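/- Let n ≥ 80. If the statements T(n, 0; 96, 96, 96) and T(n−24, 96; t(n−48), t(n−48), 0) are true, then the statement T(n, 96; t(n−24), t(n−24), 0) is true. -/

import Mathlib

open MvPolynomial

/-- The linear form associated with a coefficient vector `v ∈ ℂ^{n+1}`. -/
noncomputable def lin {n : ℕ} (v : Fin (n + 1) → ℂ) : MvPolynomial (Fin (n + 1)) ℂ :=
  ∑ j, MvPolynomial.C (v j) * MvPolynomial.X j

/-- The subspace `f·U = {f·u : u ∈ U}` of the polynomial ring, where `U` is the
space of linear forms. -/
noncomputable def mulU {n : ℕ} (f : MvPolynomial (Fin (n + 1)) ℂ) :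
    Submodule ℂ (MvPolynomial (Fin (n + 1)) ℂ) :=
  Submodule.span ℂ (Set.range fun j : Fin (n + 1) => f * MvPolynomial.X j)

/-- The affine cone `ℓ^{d-1}·U + ℓ^{d-2}·m·U` over the tangent space to the tangential
variety `T_{n,d}` of the `d`-th Veronese variety at the point `[ℓ^{d-1} m]`. -/
noncomputable def tanCone {n : ℕ} (d : ℕ) (ℓ m : Fin (n + 1) → ℂ) :
    Submodule ℂ (MvPolynomial (Fin (n + 1)) ℂ) :=
  mulU (lin ℓ ^ (d - 1)) ⊔ mulU (lin ℓ ^ (d - 2) * lin m)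

/-- `v ∈ U_{i+1}`, i.e. the coordinates of `v` indexed by `{24i, …, 24i+23}` vanish. -/
def memU {n : ℕ} (i : Fin 3) (v : Fin (n + 1) → ℂ) : Prop :=
  ∀ j : Fin (n + 1), 24 * (i : ℕ) ≤ (j : ℕ) → (j : ℕ) < 24 * (i : ℕ) + 24 → v j = 0

/-- `S_3(U_{i+1})`: the span of all products of three linear forms belonging to `U_{i+1}`. -/
noncomputable def S3U {n : ℕ} (i : Fin 3) : Submodule ℂ (MvPolynomial (Fin (n + 1)) ℂ) :=
  Submodule.span ℂ
    {p | ∃ a b c : Fin (n + 1) → ℂ,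
      memU i a ∧ memU i b ∧ memU i c ∧ p = lin a * lin b * lin c}

/-- `v ∈ U_K`, the span of the variables `x_0, …, x_71`. -/
def memK {n : ℕ} (v : Fin (n + 1) → ℂ) : Prop :=
  ∀ j : Fin (n + 1), 72 ≤ (j : ℕ) → v j = 0

/-- `S_3(U_K)`: the span of all products of three linear forms in `x_0, …, x_71`. -/
noncomputable def S3K (n : ℕ) : Submodule ℂ (MvPolynomial (Fin (n + 1)) ℂ) :=
  Submodule.span ℂ
    {p | ∃ a b c : Fin (n + 1) → ℂ,
      memK a ∧ memK b ∧ memK c ∧ p = lin a * lin b * lin c}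

/-- The alternating sum `Σ_{j=1}^k (−1)^{j−1} C(k,j) · C(n−24j+3, 3)` (with the convention
`C(m,3) = 0` for `m < 3`, realized by truncated subtraction `n+3−24j`). -/
def altsum (n k : ℕ) : ℤ :=
  ∑ j ∈ Finset.Icc 1 k, (-1 : ℤ) ^ (j - 1) * (k.choose j : ℤ) * ((n + 3 - 24 * j).choose 3 : ℤ)

/-- `k = #{i : a_i ≠ 0}`. -/
def kcount (a : Fin 3 → ℕ) : ℕ := (Finset.univ.filter fun i => a i ≠ 0).card

/-- The expected dimension `w(n, s; a_1, a_2, a_3)`, as an integer. -/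
def expdimZ (n s : ℕ) (a : Fin 3 → ℕ) : ℤ :=
  min (altsum n (kcount a) + 48 * ((a 0 + a 1 + a 2 : ℕ) : ℤ) + (2 * n + 1) * s)
    (((n + 3).choose 3 : ℤ))

/-- The subspace `W(n, s; a_1, a_2, a_3)` determined by the given points. -/
noncomputable def Wspace {n s : ℕ} {a : Fin 3 → ℕ}
    (ℓ m : Fin s → Fin (n + 1) → ℂ)
    (ℓ' m' : (i : Fin 3) → Fin (a i) → Fin (n + 1) → ℂ) :
    Submodule ℂ (MvPolynomial (Fin (n + 1)) ℂ) :=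
  (⨆ i : {i : Fin 3 // a i ≠ 0},
      (S3U i.1 ⊔ ⨆ j : Fin (a i.1), tanCone 3 (ℓ' i.1 j) (m' i.1 j)))
    ⊔ ⨆ i : Fin s, tanCone 3 (ℓ i) (m i)

/-- The statement `T(n, s; a_1, a_2, a_3)`: some choice of points realizes the expected
dimension `w(n, s; a_1, a_2, a_3)`. -/
def TStmt (n s : ℕ) (a : Fin 3 → ℕ) : Prop :=
  ∃ (ℓ m : Fin s → Fin (n + 1) → ℂ)
    (ℓ' m' : (i : Fin 3) → Fin (a i) → Fin (n + 1) → ℂ),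
    (∀ (i : Fin 3) (j : Fin (a i)), memU i (ℓ' i j) ∧ memU i (m' i j)) ∧
    (Module.finrank ℂ (Wspace ℓ m ℓ' m') : ℤ) = expdimZ n s a

/-- `s_1(n) = 48k² + (11+4r)k + ⌊(4r²+22r+33)/48⌋` where `n = 24k + r`. -/
def s1 (n : ℕ) : ℕ :=
  48 * (n / 24) ^ 2 + (11 + 4 * (n % 24)) * (n / 24) +
    (4 * (n % 24) ^ 2 + 22 * (n % 24) + 33) / 48

/-- `s_2(n) = s_1(n) + 1`. -/
def s2 (n : ℕ) : ℕ := s1 n + 1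

/-- `t(n) = 4n − 37`. -/
def tfun (n : ℕ) : ℕ := 4 * n - 37

/-- The expected codimension `c(n)` of `W(n, t(n); s_1(n−24), 0, 0)`. -/
def cInt (n : ℕ) : ℤ :=
  ((n + 3).choose 3 : ℤ) - ((n - 21).choose 3 : ℤ) - (tfun n : ℤ) * (2 * n + 1) -
    48 * (s1 (n - 24) : ℤ)

lemma choose3 (k : ℕ) : (((k + 2).choose 3 : ℕ) : ℤ) * 6 = (k + 2) * (k + 1) * k := by
  induction k with
  | zero => simp [Nat.choose]
  | succ k ih =>
    have h2 : ∀ k : ℕ, (((k + 1).choose 2 : ℕ) : ℤ) * 2 = (k + 1) * k := by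
      intro k
      induction k with
      | zero => simp
      | succ k ih =>
        rw [Nat.choose_succ_succ' (k + 1) 1]
        push_cast at *
        rw [Nat.choose_one_right]
        push_cast
        linarith
    have h := h2 (k + 1)
    rw [show k + 1 + 2 = (k + 2) + 1 by ring, Nat.choose_succ_succ' (k + 2) 2]
    push_cast at *
    rw [show k + 1 + 1 = k + 2 by ring] at h
    linarith

lemma expdim1 (n : ℕ) (hn : 80 ≤ n) :
    expdimZ n 0 ![96, 96, 96] = ((n + 3).choose 3 : ℕ) := by
  obtain ⟨m, rfl⟩ := Nat.exists_eq_add_of_le hn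
  have hk : kcount ![96, 96, 96] = 3 := by decide
  have e0 := choose3 (m + 81)
  have e1 := choose3 (m + 57)
  have e2 := choose3 (m + 33)
  have e3 := choose3 (m + 9)
  unfold expdimZ
  rw [hk]
  apply min_eq_right
  unfold altsum
  rw [show Finset.Icc 1 3 = {1, 2, 3} by decide]
  rw [Finset.sum_insert (by decide), Finset.sum_insert (by decide), Finset.sum_singleton]
  rw [show 80 + m + 3 - 24 * 1 = m + 57 + 2 by omega,
    show 80 + m + 3 - 24 * 2 = m + 33 + 2 by omega,
    show 80 + m + 3 - 24 * 3 = m + 9 + 2 by omega,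
    show 80 + m + 3 = m + 81 + 2 by omega]
  generalize (m + 81 + 2).choose 3 = c0 at *
  generalize (m + 57 + 2).choose 3 = c1 at *
  generalize (m + 33 + 2).choose 3 = c2 at *
  generalize (m + 9 + 2).choose 3 = c3 at *
  have q1 : Nat.choose 3 1 = 3 := by decide
  have q2 : Nat.choose 3 2 = 3 := by decide
  have q3 : Nat.choose 3 3 = 1 := by decide
  rw [q1, q2, q3]
  simp only [Matrix.cons_val]
  push_cast at *
  norm_num
  linarith

lemma kcount_two (t : ℕ) (ht : t ≠ 0) : kcount ![t, t, 0] = 2 := by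
  unfold kcount
  rw [show (Finset.univ.filter fun i : Fin 3 => (![t, t, 0] : Fin 3 → ℕ) i ≠ 0) = {0, 1} by
    ext i
    fin_cases i <;> simp [ht]]
  decide

/-- With two blocks and 96 free points, the expected dimension is the full one. -/
lemma expdim2 (n t : ℕ) (hn : 56 ≤ n) (ht : t = 4 * n - 133) :
    expdimZ n 96 ![t, t, 0] = ((n + 3).choose 3 : ℕ) := by
  obtain ⟨m, rfl⟩ := Nat.exists_eq_add_of_le hn
  have ht' : t = 4 * m + 91 := by omega
  have hk : kcount ![t, t, 0] = 2 := kcount_two t (by omega)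
  have e0 := choose3 (m + 57)
  have e1 := choose3 (m + 33)
  have e2 := choose3 (m + 9)
  unfold expdimZ
  rw [hk]
  apply min_eq_right
  unfold altsum
  rw [show Finset.Icc 1 2 = {1, 2} by decide]
  rw [Finset.sum_insert (by decide), Finset.sum_singleton]
  rw [show 56 + m + 3 - 24 * 1 = m + 33 + 2 by omega,
    show 56 + m + 3 - 24 * 2 = m + 9 + 2 by omega,
    show 56 + m + 3 = m + 57 + 2 by omega]
  subst ht'
  generalize (m + 57 + 2).choose 3 = c0 at *
  generalize (m + 33 + 2).choose 3 = c1 at *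
  generalize (m + 9 + 2).choose 3 = c2 at *
  have q1 : Nat.choose 2 1 = 2 := by decide
  have q2 : Nat.choose 2 2 = 1 := by decide
  rw [q1, q2]
  simp only [Matrix.cons_val]
  push_cast at *
  norm_num
  linarith

/-! ### The space of cubics -/

lemma mem_antidiag_iff {N : ℕ} (d : Fin N →₀ ℕ) :
    d ∈ Finset.finsuppAntidiag (Finset.univ : Finset (Fin N)) 3 ↔ d.degree = 3 := by
  simp [Finset.mem_finsuppAntidiag, Finsupp.degree_eq_sum]

lemma homog_eq_span (N : ℕ) : homogeneousSubmodule (Fin N) ℂ 3 =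
    Submodule.span ℂ (((Finset.finsuppAntidiag (Finset.univ : Finset (Fin N)) 3).image
      (fun d => monomial d (1 : ℂ)) : Finset (MvPolynomial (Fin N) ℂ)) : Set _) := by
  apply le_antisymm
  · intro p hp
    rw [mem_homogeneousSubmodule] at hp
    rw [p.as_sum]
    refine Submodule.sum_mem _ fun d hd => ?_
    rw [show monomial d (coeff d p) = coeff d p • monomial d (1 : ℂ) by
      rw [smul_monomial, smul_eq_mul, mul_one]]
    refine Submodule.smul_mem _ _ (Submodule.subset_span ?_)
    simp only [Finset.coe_image, Set.mem_image, Finset.mem_coe, mem_antidiag_iff]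
    refine ⟨d, ?_, rfl⟩
    have := hp (mem_support_iff.mp hd)
    rwa [Finsupp.degree_eq_weight_one]
  · rw [Submodule.span_le]
    intro p hp
    simp only [Finset.coe_image, Set.mem_image, Finset.mem_coe, mem_antidiag_iff] at hp
    obtain ⟨d, hd, rfl⟩ := hp
    exact isHomogeneous_monomial _ hd

lemma homog_finite (N : ℕ) : FiniteDimensional ℂ (homogeneousSubmodule (Fin N) ℂ 3) := by
  rw [homog_eq_span]
  exact FiniteDimensional.span_finset ℂ _

lemma homog_finrank (n : ℕ) :
    Module.finrank ℂ (homogeneousSubmodule (Fin (n + 1)) ℂ 3) = (n + 3).choose 3 := by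
  have hc : (Finset.finsuppAntidiag (Finset.univ : Finset (Fin (n + 1))) 3).card
      = (n + 3).choose 3 := by
    rw [Finset.card_finsuppAntidiag_nat_eq_choose]
    simp
  rw [homog_eq_span, finrank_span_finset_eq_card, Finset.card_image_of_injective, hc]
  · intro a b h
    exact (monomial_left_inj one_ne_zero).mp h
  · have := (basisMonomials (Fin (n + 1)) ℂ).linearIndependent
    have h2 := this.linearIndepOn_id
    refine h2.mono ?_
    intro p hp
    simp only [Finset.coe_image, Set.mem_image] at hp
    obtain ⟨d, hd, rfl⟩ := hp
    exact ⟨d, by simp⟩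

/-! ### Semicontinuity -/

/-- A polynomial family of elements of the polynomial ring. -/
def PolyFam {σ : Type} (f : ℂ → MvPolynomial σ ℂ) : Prop :=
  ∃ F : MvPolynomial σ (Polynomial ℂ), ∀ t, f t = MvPolynomial.map (Polynomial.evalRingHom t) F

lemma PolyFam.mul {σ : Type} {f g : ℂ → MvPolynomial σ ℂ} (hf : PolyFam f) (hg : PolyFam g) :
    PolyFam (fun t => f t * g t) := by
  obtain ⟨F, hF⟩ := hf
  obtain ⟨G, hG⟩ := hg
  exact ⟨F * G, fun t => by simp only [hF, hG, map_mul]⟩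

lemma PolyFam.X {σ : Type} (j : σ) : PolyFam (fun _ => (MvPolynomial.X j : MvPolynomial σ ℂ)) :=
  ⟨MvPolynomial.X j, fun t => by rw [map_X]⟩

lemma PolyFam.lin {n : ℕ} (a b : Fin (n + 1) → ℂ) :
    PolyFam (fun t : ℂ => lin (fun j => (1 - t) * a j + t * b j)) := by
  refine ⟨∑ j, C ((1 - Polynomial.X) * Polynomial.C (a j) + Polynomial.X * Polynomial.C (b j))
    * MvPolynomial.X j, fun t => ?_⟩
  simp only [_root_.lin, map_sum, map_mul, map_C, map_X]
  refine Finset.sum_congr rfl fun j _ => ?_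
  simp only [Polynomial.coe_evalRingHom, Polynomial.eval_add, Polynomial.eval_mul,
    Polynomial.eval_sub, Polynomial.eval_one, Polynomial.eval_X, Polynomial.eval_C]

lemma open_span {ι : Type} [Fintype ι] (N : ℕ)
    (K : Submodule ℂ (MvPolynomial (Fin N) ℂ)) (v : ι → ℂ → MvPolynomial (Fin N) ℂ)
    (hhom : ∀ i t, (v i t).IsHomogeneous 3) (hpoly : ∀ i, PolyFam (v i)) (t₀ : ℂ)
    (h : homogeneousSubmodule (Fin N) ℂ 3 ≤ K ⊔ Submodule.span ℂ (Set.range fun i => v i t₀)) :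
    ∃ p : Polynomial ℂ, p ≠ 0 ∧ ∀ t, p.eval t ≠ 0 →
      homogeneousSubmodule (Fin N) ℂ 3 ≤ K ⊔ Submodule.span ℂ (Set.range fun i => v i t) := by
  classical
  choose F hF using hpoly
  set D := Finset.finsuppAntidiag (Finset.univ : Finset (Fin N)) 3 with hD
  have hex : ∀ d : D, ∃ c ∈ K, ∃ B : ι → ℂ,
      c + ∑ i, B i • v i t₀ = monomial d.1 (1 : ℂ) := by
    intro d
    have hd : monomial d.1 (1 : ℂ) ∈ homogeneousSubmodule (Fin N) ℂ 3 :=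
      isHomogeneous_monomial _ ((mem_antidiag_iff _).1 d.2)
    obtain ⟨c, hc, y, hy, hcy⟩ := Submodule.mem_sup.1 (h hd)
    obtain ⟨B, rfl⟩ := (Submodule.mem_span_range_iff_exists_fun ℂ).1 hy
    exact ⟨c, hc, B, hcy⟩
  choose c hc B hB using hex
  have hchom : ∀ d, (c d).IsHomogeneous 3 := by
    intro d
    have : c d = monomial d.1 (1 : ℂ) - ∑ i, B d i • v i t₀ := by rw [← hB d]; ring
    rw [← mem_homogeneousSubmodule, this]
    refine Submodule.sub_mem _ (isHomogeneous_monomial _ ((mem_antidiag_iff _).1 d.2)) ?_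
    exact Submodule.sum_mem _ fun i _ => Submodule.smul_mem _ _ (hhom i t₀)
  let M : Matrix D D (Polynomial ℂ) := fun d e =>
    Polynomial.C (coeff e.1 (c d)) + ∑ i, Polynomial.C (B d i) * coeff e.1 (F i)
  have hM : ∀ t d e, (M d e).eval t = coeff e.1 (c d + ∑ i, B d i • v i t) := by
    intro t d e
    simp only [M, Polynomial.eval_add, Polynomial.eval_C, Polynomial.eval_finsetSum,
      Polynomial.eval_mul, coeff_add, coeff_sum, coeff_smul, smul_eq_mul, hF, coeff_map,
      Polynomial.coe_evalRingHom]
  have hdet : ∀ t, M.det.eval t = (M.map (Polynomial.evalRingHom t)).det := by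
    intro t
    have := RingHom.map_det (Polynomial.evalRingHom t) M
    simpa using this
  refine ⟨M.det, ?_, ?_⟩
  · intro h0
    have h1 := hdet t₀
    have h2 : M.map (Polynomial.evalRingHom t₀) = 1 := by
      ext d e
      rw [Matrix.map_apply, Polynomial.coe_evalRingHom, hM, hB, coeff_monomial, Matrix.one_apply]
      simp only [Subtype.ext_iff]
    rw [h0, h2] at h1
    simp at h1
  · intro t ht
    rw [hdet] at ht
    set A := M.map (Polynomial.evalRingHom t) with hA
    set W := K ⊔ Submodule.span ℂ (Set.range fun i => v i t) with hW
    have hrow : ∀ d, ∑ e : D, A d e • monomial e.1 (1 : ℂ) ∈ W := by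
      intro d
      have hg : (c d + ∑ i, B d i • v i t) ∈ W := by
        refine Submodule.add_mem_sup (hc d) ?_
        exact Submodule.sum_mem _ fun i _ =>
          Submodule.smul_mem _ _ (Submodule.subset_span ⟨i, rfl⟩)
      have hgh : (c d + ∑ i, B d i • v i t).IsHomogeneous 3 :=
        (hchom d).add (Submodule.sum_mem (homogeneousSubmodule (Fin N) ℂ 3) fun i _ =>
          Submodule.smul_mem _ _ (hhom i t))
      convert hg using 1
      ext x
      simp only [coeff_sum, coeff_smul, coeff_monomial, smul_eq_mul, mul_ite, mul_one, mul_zero]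
      by_cases hx : x ∈ D
      · rw [Finset.sum_eq_single ⟨x, hx⟩]
        · simp only [if_true, hA, Matrix.map_apply, Polynomial.coe_evalRingHom, hM]
        · intro b _ hb
          rw [if_neg]
          intro h
          exact hb (Subtype.ext h)
        · simp
      · rw [Finset.sum_eq_zero, hgh.coeff_eq_zero]
        · rwa [Ne, ← mem_antidiag_iff]
        · intro b _
          rw [if_neg]
          rintro rfl
          exact hx b.2
    rw [homog_eq_span, Submodule.span_le]
    intro p hp
    simp only [Finset.coe_image, Set.mem_image, Finset.mem_coe] at hp
    obtain ⟨d, hd, rfl⟩ := hp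
    have hinv : A⁻¹ * A = 1 := Matrix.nonsing_inv_mul A (isUnit_iff_ne_zero.2 ht)
    have key : monomial d (1 : ℂ) =
        ∑ d' : D, A⁻¹ ⟨d, hd⟩ d' • ∑ e : D, A d' e • monomial e.1 (1 : ℂ) := by
      simp only [Finset.smul_sum, smul_smul]
      rw [Finset.sum_comm]
      simp only [← Finset.sum_smul, ← Matrix.mul_apply, hinv]
      rw [Finset.sum_eq_single ⟨d, hd⟩]
      · simp
      · intro b _ hb
        rw [Matrix.one_apply_ne hb.symm, zero_smul]
      · simp
    rw [SetLike.mem_coe, key]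
    exact Submodule.sum_mem _ fun d' _ => Submodule.smul_mem _ _ (hrow d')

/-! ### Tangent cones -/

/-- Affine interpolation between two vectors. -/
def lineV {n : ℕ} (a b : Fin (n + 1) → ℂ) (t : ℂ) : Fin (n + 1) → ℂ :=
  fun j => (1 - t) * a j + t * b j

lemma lineV_zero {n : ℕ} (a b : Fin (n + 1) → ℂ) : lineV a b 0 = a := by
  funext j; simp [lineV]

lemma lineV_one {n : ℕ} (a b : Fin (n + 1) → ℂ) : lineV a b 1 = b := by
  funext j; simp [lineV]

lemma lin_homog {n : ℕ} (v : Fin (n + 1) → ℂ) : (lin v).IsHomogeneous 1 := by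
  unfold lin
  exact IsHomogeneous.sum _ _ _ fun j _ => by
    simpa using (isHomogeneous_C _ (v j)).mul (isHomogeneous_X ℂ j)

/-- Generators of the tangent cone. -/
noncomputable def gen {n : ℕ} (ℓ m : Fin (n + 1) → ℂ) (j : Fin (n + 1)) (c : Bool) :
    MvPolynomial (Fin (n + 1)) ℂ :=
  if c then lin ℓ * lin ℓ * X j else lin ℓ * lin m * X j

lemma gen_homog {n : ℕ} (ℓ m : Fin (n + 1) → ℂ) (j : Fin (n + 1)) (c : Bool) :
    (gen ℓ m j c).IsHomogeneous 3 := by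
  unfold gen
  split
  · exact ((lin_homog ℓ).mul (lin_homog ℓ)).mul (isHomogeneous_X ℂ j)
  · exact ((lin_homog ℓ).mul (lin_homog m)).mul (isHomogeneous_X ℂ j)

lemma gen_mem {n : ℕ} (ℓ m : Fin (n + 1) → ℂ) (j : Fin (n + 1)) (c : Bool) :
    gen ℓ m j c ∈ tanCone 3 ℓ m := by
  unfold gen tanCone mulU
  split
  · refine Submodule.mem_sup_left (Submodule.subset_span ⟨j, ?_⟩)
    simp [pow_two]
  · refine Submodule.mem_sup_right (Submodule.subset_span ⟨j, ?_⟩)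
    simp

lemma tanCone_le {n : ℕ} (ℓ m : Fin (n + 1) → ℂ)
    (P : Submodule ℂ (MvPolynomial (Fin (n + 1)) ℂ)) (h : ∀ j c, gen ℓ m j c ∈ P) :
    tanCone 3 ℓ m ≤ P := by
  unfold tanCone mulU
  refine sup_le ?_ ?_ <;> rw [Submodule.span_le]
  · rintro _ ⟨j, rfl⟩
    simpa [gen, pow_two] using h j true
  · rintro _ ⟨j, rfl⟩
    simpa [gen] using h j false

lemma tanCone_le_homog {n : ℕ} (ℓ m : Fin (n + 1) → ℂ) :
    tanCone 3 ℓ m ≤ homogeneousSubmodule (Fin (n + 1)) ℂ 3 :=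
  tanCone_le _ _ _ fun j c => gen_homog ℓ m j c

lemma S3U_le_homog {n : ℕ} (i : Fin 3) :
    (S3U i : Submodule ℂ (MvPolynomial (Fin (n + 1)) ℂ))
      ≤ homogeneousSubmodule (Fin (n + 1)) ℂ 3 := by
  unfold S3U
  rw [Submodule.span_le]
  rintro _ ⟨a, b, c, -, -, -, rfl⟩
  exact ((lin_homog a).mul (lin_homog b)).mul (lin_homog c)

lemma Wspace_le_homog {n s : ℕ} {a : Fin 3 → ℕ}
    (ℓ m : Fin s → Fin (n + 1) → ℂ) (ℓ' m' : (i : Fin 3) → Fin (a i) → Fin (n + 1) → ℂ) :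
    Wspace ℓ m ℓ' m' ≤ homogeneousSubmodule (Fin (n + 1)) ℂ 3 :=
  sup_le (iSup_le fun i => sup_le (S3U_le_homog _) (iSup_le fun j => tanCone_le_homog _ _))
    (iSup_le fun i => tanCone_le_homog _ _)

lemma homog_le_of_finrank {n : ℕ} (W : Submodule ℂ (MvPolynomial (Fin (n + 1)) ℂ))
    (h : W ≤ homogeneousSubmodule (Fin (n + 1)) ℂ 3)
    (hd : (Module.finrank ℂ W : ℤ) = ((n + 3).choose 3 : ℕ)) :
    homogeneousSubmodule (Fin (n + 1)) ℂ 3 ≤ W := by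
  have := homog_finite (n + 1)
  have hd' : Module.finrank ℂ W = (n + 3).choose 3 := by exact_mod_cast hd
  refine (Submodule.eq_of_le_of_finrank_le h ?_).ge
  rw [homog_finrank, hd']

/-- Spanning all cubics is an open condition along a line of choices of points. -/
lemma cone_open {n s : ℕ} (K : Submodule ℂ (MvPolynomial (Fin (n + 1)) ℂ))
    (a b a' b' : Fin s → Fin (n + 1) → ℂ) (t₀ : ℂ)
    (h : homogeneousSubmodule (Fin (n + 1)) ℂ 3 ≤
      K ⊔ ⨆ i, tanCone 3 (lineV (a i) (b i) t₀) (lineV (a' i) (b' i) t₀)) :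
    ∃ p : Polynomial ℂ, p ≠ 0 ∧ ∀ t, p.eval t ≠ 0 →
      homogeneousSubmodule (Fin (n + 1)) ℂ 3 ≤
        K ⊔ ⨆ i, tanCone 3 (lineV (a i) (b i) t) (lineV (a' i) (b' i) t) := by
  let v : Fin s × Fin (n + 1) × Bool → ℂ → MvPolynomial (Fin (n + 1)) ℂ :=
    fun x t => gen (lineV (a x.1) (b x.1) t) (lineV (a' x.1) (b' x.1) t) x.2.1 x.2.2
  obtain ⟨p, hp, hpt⟩ := open_span (n + 1) K v (fun x t => gen_homog _ _ _ _) (by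
      rintro ⟨i, j, c⟩
      have hl : PolyFam fun t => lin (lineV (a i) (b i) t) := PolyFam.lin _ _
      have hm : PolyFam fun t => lin (lineV (a' i) (b' i) t) := PolyFam.lin _ _
      cases c
      · simpa [v, gen] using (hl.mul hm).mul (PolyFam.X j)
      · simpa [v, gen] using (hl.mul hl).mul (PolyFam.X j)) t₀ (by
      refine h.trans (sup_le_sup_left (iSup_le fun i => tanCone_le _ _ _ fun j c => ?_) _)
      exact Submodule.subset_span ⟨(i, j, c), rfl⟩)
  refine ⟨p, hp, fun t ht => (hpt t ht).trans (sup_le_sup_left ?_ _)⟩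
  rw [Submodule.span_le]
  rintro _ ⟨⟨i, j, c⟩, rfl⟩
  exact (le_iSup (fun i => tanCone 3 (lineV (a i) (b i) t) (lineV (a' i) (b' i) t)) i)
    (gen_mem _ _ _ _)

/-! ### Unpacking the statements -/

lemma unpack1 {n : ℕ} (hn : 80 ≤ n) (h : TStmt n 0 ![96, 96, 96]) :
    ∃ L M : Fin 3 → Fin 96 → Fin (n + 1) → ℂ,
      (∀ i j, memU i (L i j) ∧ memU i (M i j)) ∧
      homogeneousSubmodule (Fin (n + 1)) ℂ 3 ≤
        (⨆ i, S3U i) ⊔ ⨆ i, ⨆ j, tanCone 3 (L i j) (M i j) := by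
  obtain ⟨ℓ, m, ℓ', m', hU, hd⟩ := h
  rw [expdim1 n hn] at hd
  have hle := homog_le_of_finrank _ (Wspace_le_homog ℓ m ℓ' m') hd
  have e : ∀ i : Fin 3, (![96, 96, 96] : Fin 3 → ℕ) i = 96 := by
    intro i; fin_cases i <;> rfl
  refine ⟨fun i j => ℓ' i (Fin.cast (e i).symm j), fun i j => m' i (Fin.cast (e i).symm j),
    fun i j => hU i _, hle.trans ?_⟩
  refine sup_le (iSup_le fun i => sup_le ?_ (iSup_le fun j => ?_)) (iSup_le fun i => i.elim0)
  · exact le_sup_of_le_left (le_iSup (fun i => S3U i) i.1)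
  · refine le_sup_of_le_right (le_iSup_of_le i.1 (le_iSup_of_le (Fin.cast (e i.1) j) ?_))
    exact le_rfl

lemma unpack2 {n t : ℕ} (hn : 56 ≤ n) (ht : t = 4 * n - 133) (h : TStmt n 96 ![t, t, 0]) :
    ∃ (ℓ m : Fin 96 → Fin (n + 1) → ℂ) (L M : Fin 2 → Fin t → Fin (n + 1) → ℂ),
      (∀ i j, memU i.castSucc (L i j) ∧ memU i.castSucc (M i j)) ∧
      homogeneousSubmodule (Fin (n + 1)) ℂ 3 ≤
        ((⨆ i : Fin 2, S3U i.castSucc) ⊔ ⨆ i, ⨆ j, tanCone 3 (L i j) (M i j)) ⊔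
          ⨆ i, tanCone 3 (ℓ i) (m i) := by
  obtain ⟨ℓ, m, ℓ', m', hU, hd⟩ := h
  rw [expdim2 n t hn ht] at hd
  have hle := homog_le_of_finrank _ (Wspace_le_homog ℓ m ℓ' m') hd
  have e : ∀ i : Fin 2, (![t, t, 0] : Fin 3 → ℕ) i.castSucc = t := by
    intro i; fin_cases i <;> rfl
  refine ⟨ℓ, m, fun i j => ℓ' i.castSucc (Fin.cast (e i).symm j),
    fun i j => m' i.castSucc (Fin.cast (e i).symm j), fun i j => hU _ _, hle.trans ?_⟩
  refine sup_le_sup_right (iSup_le fun i => ?_) _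
  obtain ⟨i, hi⟩ := i
  induction i using Fin.lastCases with
  | last => exact absurd rfl hi
  | cast i =>
    refine sup_le ?_ (iSup_le fun j => ?_)
    · exact le_sup_of_le_left (le_iSup (fun i : Fin 2 => S3U i.castSucc) i)
    · refine le_sup_of_le_right (le_iSup_of_le i (le_iSup_of_le (Fin.cast (e i) j) ?_))
      exact le_rfl

lemma pack2 {n t : ℕ} (hn : 56 ≤ n) (ht : t = 4 * n - 133)
    (ℓ m : Fin 96 → Fin (n + 1) → ℂ) (L M : Fin 2 → Fin t → Fin (n + 1) → ℂ)
    (hU : ∀ i j, memU i.castSucc (L i j) ∧ memU i.castSucc (M i j))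
    (hle : homogeneousSubmodule (Fin (n + 1)) ℂ 3 ≤
        ((⨆ i : Fin 2, S3U i.castSucc) ⊔ ⨆ i, ⨆ j, tanCone 3 (L i j) (M i j)) ⊔
          ⨆ i, tanCone 3 (ℓ i) (m i)) : TStmt n 96 ![t, t, 0] := by
  have e : ∀ i : Fin 2, (![t, t, 0] : Fin 3 → ℕ) i.castSucc = t := by
    intro i; fin_cases i <;> rfl
  let ℓ' : (i : Fin 3) → Fin ((![t, t, 0] : Fin 3 → ℕ) i) → Fin (n + 1) → ℂ :=
    fun i => Fin.lastCases (motive := fun i => Fin ((![t, t, 0] : Fin 3 → ℕ) i) → Fin (n + 1) → ℂ)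
      (fun _ => 0) (fun i j => L i (Fin.cast (e i) j)) i
  let m' : (i : Fin 3) → Fin ((![t, t, 0] : Fin 3 → ℕ) i) → Fin (n + 1) → ℂ :=
    fun i => Fin.lastCases (motive := fun i => Fin ((![t, t, 0] : Fin 3 → ℕ) i) → Fin (n + 1) → ℂ)
      (fun _ => 0) (fun i j => M i (Fin.cast (e i) j)) i
  have hℓ : ∀ i j, ℓ' (Fin.castSucc i) j = L i (Fin.cast (e i) j) := by
    intro i j; simp only [ℓ', Fin.lastCases_castSucc]
  have hm : ∀ i j, m' (Fin.castSucc i) j = M i (Fin.cast (e i) j) := by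
    intro i j; simp only [m', Fin.lastCases_castSucc]
  refine ⟨ℓ, m, ℓ', m', ?_, ?_⟩
  · intro i j
    induction i using Fin.lastCases with
    | last => exact j.elim0
    | cast i =>
      rw [hℓ, hm]
      exact hU _ _
  · rw [expdim2 n t hn ht]
    have : Wspace ℓ m ℓ' m' = homogeneousSubmodule (Fin (n + 1)) ℂ 3 := by
      refine le_antisymm (Wspace_le_homog _ _ _ _) (hle.trans (sup_le_sup_right ?_ _))
      have hne : ∀ i : Fin 2, (![t, t, 0] : Fin 3 → ℕ) i.castSucc ≠ 0 := by
        intro i; rw [e]; omega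
      refine sup_le (iSup_le fun i => ?_) (iSup_le fun i => iSup_le fun j => ?_)
      · exact le_iSup_of_le ⟨i.castSucc, hne i⟩ le_sup_left
      · refine le_iSup_of_le ⟨i.castSucc, hne i⟩ (le_sup_of_le_right
          (le_iSup_of_le (Fin.cast (e i).symm j) ?_))
        rw [hℓ, hm]
        exact le_rfl
    rw [this, homog_finrank]

/-! ### The embedding of `U_3` -/

/-- The embedding of variables omitting the third block. -/
def emb {m : ℕ} (j : Fin (m + 1)) : Fin (m + 24 + 1) :=
  ⟨if (j : ℕ) < 48 then j else j + 24, by split <;> omega⟩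

lemma emb_inj {m : ℕ} : Function.Injective (emb (m := m)) := by
  intro a b h
  have := congrArg Fin.val h
  simp only [emb] at this
  apply Fin.ext
  split at this <;> split at this <;> omega

lemma not_range {m : ℕ} (hm : 56 ≤ m) (k : Fin (m + 24 + 1)) (h : ¬ ∃ j, emb (m := m) j = k) :
    48 ≤ (k : ℕ) ∧ (k : ℕ) < 72 := by
  by_contra hc
  apply h
  by_cases h48 : (k : ℕ) < 48
  · exact ⟨⟨k, by omega⟩, by apply Fin.ext; simp [emb, h48]⟩
  · exact ⟨⟨k - 24, by omega⟩, by
      apply Fin.ext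
      have : ¬ ((k : ℕ) - 24 < 48) := by omega
      simp only [emb, this, if_false]
      omega⟩

/-- Extension by zero on the third block. -/
noncomputable def extV {m : ℕ} (v : Fin (m + 1) → ℂ) : Fin (m + 24 + 1) → ℂ :=
  Function.extend emb v 0

lemma extV_emb {m : ℕ} (v : Fin (m + 1) → ℂ) (j : Fin (m + 1)) : extV v (emb j) = v j :=
  emb_inj.extend_apply v 0 j

lemma extV_not {m : ℕ} (v : Fin (m + 1) → ℂ) (k : Fin (m + 24 + 1)) (h : ¬ ∃ j, emb j = k) :
    extV v k = 0 :=
  Function.extend_apply' v (0 : Fin (m + 24 + 1) → ℂ) k h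

lemma extV_res {m : ℕ} (hm : 56 ≤ m) (a : Fin (m + 24 + 1) → ℂ) (ha : memU 2 a) :
    extV (fun j => a (emb j)) = a := by
  funext k
  by_cases h : ∃ j, emb (m := m) j = k
  · obtain ⟨j, rfl⟩ := h
    rw [extV_emb]
  · rw [extV_not _ _ h]
    have := not_range hm k h
    exact (ha k (by simpa using this.1) (by simpa using this.2)).symm

lemma memU_extV {m : ℕ} (v : Fin (m + 1) → ℂ) (i : Fin 2) (hv : memU i.castSucc v) :
    memU i.castSucc (extV v) := by
  intro k h1 h2
  have hi := i.2
  rw [Fin.val_castSucc] at h1 h2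
  by_cases h : ∃ j, emb (m := m) j = k
  · obtain ⟨j, rfl⟩ := h
    rw [extV_emb]
    have hj : ((emb j : Fin (m + 24 + 1)) : ℕ) = j := by
      simp only [emb] at h1 h2 ⊢
      split at h2 <;> split <;> omega
    rw [hj] at h1 h2
    exact hv j h1 h2
  · exact extV_not _ _ h

lemma extV_line {m : ℕ} (a b : Fin (m + 1) → ℂ) (t : ℂ) :
    extV (lineV a b t) = lineV (extV a) (extV b) t := by
  funext k
  by_cases h : ∃ j, emb (m := m) j = k
  · obtain ⟨j, rfl⟩ := h
    simp only [lineV, extV_emb]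
  · simp only [lineV, extV_not _ _ h]
    simp

lemma rename_lin {m : ℕ} (v : Fin (m + 1) → ℂ) : rename emb (lin v) = lin (extV v) := by
  unfold lin
  rw [map_sum]
  simp only [map_mul, rename_C, rename_X]
  refine Finset.sum_of_injOn emb (emb_inj.injOn) (by simp) ?_ ?_
  · intro k _ hk
    rw [extV_not]
    · simp
    · rintro ⟨j, rfl⟩
      exact hk ⟨j, by simp, rfl⟩
  · intro j _
    rw [extV_emb]

lemma map_tanCone {m : ℕ} (a b : Fin (m + 1) → ℂ) :
    tanCone 3 a b ≤ (tanCone 3 (extV a) (extV b)).comap (rename emb).toLinearMap := by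
  refine tanCone_le _ _ _ fun j c => ?_
  rw [Submodule.mem_comap, AlgHom.toLinearMap_apply]
  have : rename emb (gen a b j c) = gen (extV a) (extV b) (emb j) c := by
    cases c <;> simp [gen, rename_lin]
  rw [this]
  exact gen_mem _ _ _ _

lemma map_S3U {m : ℕ} (i : Fin 2) :
    (S3U i.castSucc : Submodule ℂ (MvPolynomial (Fin (m + 1)) ℂ)) ≤
      (S3U i.castSucc : Submodule ℂ (MvPolynomial (Fin (m + 24 + 1)) ℂ)).comap
        (rename emb).toLinearMap := by
  unfold S3U
  rw [Submodule.span_le]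
  rintro _ ⟨a, b, c, ha, hb, hc, rfl⟩
  rw [SetLike.mem_coe, Submodule.mem_comap, AlgHom.toLinearMap_apply]
  refine Submodule.subset_span ⟨extV a, extV b, extV c, memU_extV _ _ ha, memU_extV _ _ hb,
    memU_extV _ _ hc, ?_⟩
  simp [rename_lin]

lemma S3U_two_le {m : ℕ} (hm : 56 ≤ m) (W : Submodule ℂ (MvPolynomial (Fin (m + 24 + 1)) ℂ))
    (h : homogeneousSubmodule (Fin (m + 1)) ℂ 3 ≤ W.comap (rename emb).toLinearMap) :
    S3U 2 ≤ W := by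
  unfold S3U
  rw [Submodule.span_le]
  rintro _ ⟨a, b, c, ha, hb, hc, rfl⟩
  have := h (show lin (fun j => a (emb j)) * lin (fun j => b (emb j)) * lin (fun j => c (emb j)) ∈
      homogeneousSubmodule (Fin (m + 1)) ℂ 3 from
    ((lin_homog _).mul (lin_homog _)).mul (lin_homog _))
  rw [Submodule.mem_comap, AlgHom.toLinearMap_apply, map_mul, map_mul, rename_lin, rename_lin,
    rename_lin, extV_res hm a ha, extV_res hm b hb, extV_res hm c hc] at this
  exact this

lemma exists_good (p q : Polynomial ℂ) (hp : p ≠ 0) (hq : q ≠ 0) :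
    ∃ t, p.eval t ≠ 0 ∧ q.eval t ≠ 0 := by
  by_contra hc
  push Not at hc
  refine mul_ne_zero hp hq (Polynomial.funext fun t => ?_)
  rw [Polynomial.eval_mul, Polynomial.eval_zero]
  by_cases h : p.eval t = 0
  · rw [h, zero_mul]
  · rw [hc t h, mul_zero]

lemma main_step {m t : ℕ} (hm : 56 ≤ m) (ht : t = 4 * m - 133)
    (h1 : TStmt (m + 24) 0 ![96, 96, 96]) (h2 : TStmt m 96 ![t, t, 0]) :
    TStmt (m + 24) 96 ![t + 96, t + 96, 0] := by
  obtain ⟨L1, M1, hU1, H1⟩ := unpack1 (by omega) h1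
  obtain ⟨ℓ2, m2, L2, M2, hU2, H2⟩ := unpack2 hm ht h2
  let a : Fin 96 → Fin (m + 1) → ℂ := fun i j => L1 2 i (emb j)
  let b : Fin 96 → Fin (m + 1) → ℂ := fun i j => M1 2 i (emb j)
  have ha : ∀ i, extV (a i) = L1 2 i := fun i => extV_res hm _ (hU1 2 i).1
  have hb : ∀ i, extV (b i) = M1 2 i := fun i => extV_res hm _ (hU1 2 i).2
  -- the two open conditions on the interpolation parameter
  obtain ⟨p, hp, Hp⟩ := cone_open
    ((⨆ i, S3U i) ⊔ ⨆ i : Fin 2, ⨆ j, tanCone 3 (L1 i.castSucc j) (M1 i.castSucc j))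
    (fun i => extV (a i)) (fun i => extV (ℓ2 i)) (fun i => extV (b i)) (fun i => extV (m2 i)) 0 (by
      refine H1.trans ?_
      simp only [lineV_zero, ha, hb]
      refine sup_le (le_sup_of_le_left le_sup_left) (iSup_le fun i => ?_)
      induction i using Fin.lastCases with
      | last => exact le_sup_right
      | cast i =>
        exact le_sup_of_le_left (le_sup_of_le_right (le_iSup (fun i : Fin 2 =>
          ⨆ j, tanCone 3 (L1 i.castSucc j) (M1 i.castSucc j)) i)))
  obtain ⟨q, hq, Hq⟩ := cone_open
    ((⨆ i : Fin 2, S3U i.castSucc) ⊔ ⨆ i, ⨆ j, tanCone 3 (L2 i j) (M2 i j))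
    a ℓ2 b m2 1 (by simpa only [lineV_one] using H2)
  obtain ⟨z, hz1, hz2⟩ := exists_good p q hp hq
  have G1 := Hp z hz1
  have G2 := Hq z hz2
  simp only [← extV_line] at G1
  let L : Fin 2 → Fin (t + 96) → Fin (m + 24 + 1) → ℂ :=
    fun i => Fin.append (fun j => extV (L2 i j)) (L1 i.castSucc)
  let M : Fin 2 → Fin (t + 96) → Fin (m + 24 + 1) → ℂ :=
    fun i => Fin.append (fun j => extV (M2 i j)) (M1 i.castSucc)
  have hLl : ∀ i j, L i (Fin.castAdd 96 j) = extV (L2 i j) := fun i j => Fin.append_left _ _ _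
  have hMl : ∀ i j, M i (Fin.castAdd 96 j) = extV (M2 i j) := fun i j => Fin.append_left _ _ _
  have hLr : ∀ i j, L i (Fin.natAdd t j) = L1 i.castSucc j := fun i j => Fin.append_right _ _ _
  have hMr : ∀ i j, M i (Fin.natAdd t j) = M1 i.castSucc j := fun i j => Fin.append_right _ _ _
  refine pack2 (by omega) (by omega) (fun i => extV (lineV (a i) (ℓ2 i) z))
    (fun i => extV (lineV (b i) (m2 i) z)) L M ?_ ?_
  · intro i j
    induction j using Fin.addCases with
    | left j =>
      rw [hLl, hMl]
      exact ⟨memU_extV _ _ (hU2 i j).1, memU_extV _ _ (hU2 i j).2⟩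
    | right j =>
      rw [hLr, hMr]
      exact hU1 _ _
  · set W := ((⨆ i : Fin 2, S3U i.castSucc) ⊔ ⨆ i, ⨆ j, tanCone 3 (L i j) (M i j)) ⊔
      ⨆ i, tanCone 3 (extV (lineV (a i) (ℓ2 i) z)) (extV (lineV (b i) (m2 i) z)) with hW
    have w1 : ∀ i : Fin 2, S3U i.castSucc ≤ W := fun i =>
      le_sup_of_le_left (le_sup_of_le_left (le_iSup (fun i : Fin 2 => S3U i.castSucc) i))
    have w2 : ∀ i j, tanCone 3 (L i j) (M i j) ≤ W := fun i j =>
      le_sup_of_le_left (le_sup_of_le_right (le_iSup_of_le i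
        (le_iSup (fun j => tanCone 3 (L i j) (M i j)) j)))
    have w3 : ∀ i, tanCone 3 (extV (lineV (a i) (ℓ2 i) z)) (extV (lineV (b i) (m2 i) z)) ≤ W :=
      fun i => le_sup_of_le_right (le_iSup (fun i =>
        tanCone 3 (extV (lineV (a i) (ℓ2 i) z)) (extV (lineV (b i) (m2 i) z))) i)
    have w4 : S3U 2 ≤ W := by
      apply S3U_two_le hm
      refine G2.trans (sup_le (sup_le (iSup_le fun i => ?_)
        (iSup_le fun i => iSup_le fun j => ?_)) (iSup_le fun i => ?_))
      · exact (map_S3U i).trans (Submodule.comap_mono (w1 i))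
      · refine (map_tanCone _ _).trans (Submodule.comap_mono ?_)
        have := w2 i (Fin.castAdd 96 j)
        rwa [hLl, hMl] at this
      · exact (map_tanCone _ _).trans (Submodule.comap_mono (w3 i))
    refine G1.trans (sup_le (sup_le (iSup_le fun i => ?_)
        (iSup_le fun i => iSup_le fun j => ?_)) (iSup_le fun i => w3 i))
    · induction i using Fin.lastCases with
      | last => exact w4
      | cast i => exact w1 i
    · have := w2 i (Fin.natAdd t j)
      rwa [hLr, hMr] at this

/-- Proposition 3.7 (iii): for `n ≥ 80`, truth of `T(n, 0; 96, 96, 96)` and of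
`T(n−24, 96; t(n−48), t(n−48), 0)` implies truth of `T(n, 96; t(n−24), t(n−24), 0)`. -/
theorem induction_step_iii (n : ℕ) (hn : 80 ≤ n)
    (h1 : TStmt n 0 ![96, 96, 96])
    (h2 : TStmt (n - 24) 96 ![tfun (n - 48), tfun (n - 48), 0]) :
    TStmt n 96 ![tfun (n - 24), tfun (n - 24), 0] := by

  obtain ⟨m, rfl⟩ : ∃ m, n = m + 24 := ⟨n - 24, by omega⟩
  have e1 : m + 24 - 24 = m := by omega
  have e2 : tfun m = tfun (m + 24 - 48) + 96 := by unfold tfun; omega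
  rw [e1] at h2 ⊢
  rw [e2]
  exact main_step (by omega) (by unfold tfun; omega) h1 h2
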